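/- For every α with 0 ≤ α < 2 there exists a constant C_α > 0, depending only on α, such that the following holds. Let β ≥ 0, M > 0, 0 < δ ≤ M/4, and let Ω₀ ⊆ ℝ² be a bounded open set with |Ω₀| ≤ 100 M² that satisfies Ω₀ ∩ {x ∈ [−M,M]² : |x| > δ} = {x ∈ (0,∞)² : β x₂ < x₁} ∩ {x ∈ [−M,M]² : |x| > δ}. For a ∈ [2δ, M/2] define V(a) := lim_{ε→0⁺} ∫_{Ω₀ \ B̄((a,0),ε)} (a−y₁)/((a−y₁)² + y₂²)^{1+α/2} dy₁ dy₂. Then this principal-value limit exists for every a ∈ [2δ, M/2], V is twice differentiable there, and |V″(a) − F(α,β)/a^{1+α}| ≤ C_α (1/M^{1+α} + δ²/a^{3+α}) for every a ∈ [2δ, M/2]. -/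

import Mathlib

open MeasureTheory Real Filter

/-- `F α β = β/(β²+1) − (α/(β²+1)^{1−α/2}) ∫_{−arctan β}^{π/2} cos^α θ dθ`. -/
noncomputable def F (α β : ℝ) : ℝ :=
  β / (β ^ 2 + 1) -
    α / (β ^ 2 + 1) ^ (1 - α / 2) * ∫ θ in (-Real.arctan β)..(Real.pi / 2), Real.cos θ ^ α

open Set
open scoped Topology

/-!
Split `Ω₀` into its part outside `[-M, M]²`, its part inside the disc of radius `δ` around the
origin and the wedge `β y₂ < y₁` truncated to the square and deprived of that disc. The first part
lies at distance at least `M / 2` from `(a, 0)`; the discs of radius `δ` lie at distance at least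
`a / 2` and have area at most `4 δ²`. Differentiating twice under the integral sign there gives
the two error terms.

On the whole truncated wedge, integrate in `y₁` first. The kernel is odd in `a - y₁`, so each
horizontal chord of the excluded disc contributes zero, and for small `ε` the truncated integral
is exactly a difference of two integrals of a potential of the kernel, over the slanted edge
`y₁ = β y₂` and over the vertical edge `y₁ = M`. Both edges avoid `(a, 0)`, so these can be
differentiated twice. The second derivative over the slanted edge, prolonged to the full ray, is
`F α β / a ^ (1 + α)`; the prolongation and the vertical edge cost `O(M ^ (-(1 + α)))`.
-/

section Kernel

variable {p u v d : ℝ}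

/-- The odd kernel `u / |(u, v)| ^ (2 * p)`. -/
noncomputable def oddKernel (p u v : ℝ) : ℝ := u / (u ^ 2 + v ^ 2) ^ p

/-- A primitive of `oddKernel p` in the variable `u`, logarithmic for `p = 1`. -/
noncomputable def oddKernelPotential (p u v : ℝ) : ℝ :=
  if p = 1 then Real.log (u ^ 2 + v ^ 2) / 2 else (u ^ 2 + v ^ 2) ^ (1 - p) / (2 * (1 - p))

/-- The derivative of `oddKernel p` in the variable `u`. -/
noncomputable def oddKernelDeriv (p u v : ℝ) : ℝ :=
  (u ^ 2 + v ^ 2) ^ (-p) - 2 * p * (u ^ 2 * (u ^ 2 + v ^ 2) ^ (-(p + 1)))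

/-- The second derivative of `oddKernel p` in the variable `u`. -/
noncomputable def oddKernelDeriv₂ (p u v : ℝ) : ℝ :=
  4 * p * (p + 1) * (u ^ 3 * (u ^ 2 + v ^ 2) ^ (-(p + 2))) -
    6 * p * (u * (u ^ 2 + v ^ 2) ^ (-(p + 1)))

lemma oddKernel_eq_mul_rpow (p u v : ℝ) : oddKernel p u v = u * (u ^ 2 + v ^ 2) ^ (-p) := by
  rw [oddKernel, Real.rpow_neg (by positivity), div_eq_mul_inv]

lemma oddKernel_neg (p u v : ℝ) : oddKernel p (-u) v = -oddKernel p u v := by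
  rw [oddKernel, oddKernel, neg_sq, neg_div]

lemma hasDerivAt_sq_add_sq (u v : ℝ) : HasDerivAt (fun u : ℝ => u ^ 2 + v ^ 2) (2 * u) u := by
  simpa using (hasDerivAt_pow 2 u).add_const (v ^ 2)

lemma hasDerivAt_sq_add_sq_rpow (h : 0 < u ^ 2 + v ^ 2) (t : ℝ) :
    HasDerivAt (fun u : ℝ => (u ^ 2 + v ^ 2) ^ t) (2 * u * t * (u ^ 2 + v ^ 2) ^ (t - 1)) u :=
  (hasDerivAt_sq_add_sq u v).rpow_const (Or.inl h.ne')

lemma hasDerivAt_oddKernelPotential (p : ℝ) (h : 0 < u ^ 2 + v ^ 2) :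
    HasDerivAt (oddKernelPotential p · v) (oddKernel p u v) u := by
  simp only [oddKernelPotential, oddKernel_eq_mul_rpow]
  split_ifs with hp
  · refine (((hasDerivAt_sq_add_sq u v).log h.ne').div_const 2).congr_deriv ?_
    rw [hp, Real.rpow_neg_one]
    ring
  · refine ((hasDerivAt_sq_add_sq_rpow h (1 - p)).div_const (2 * (1 - p))).congr_deriv ?_
    have : 1 - p ≠ 0 := sub_ne_zero.2 (Ne.symm hp)
    rw [show 1 - p - 1 = -p by ring]
    field_simp

lemma hasDerivAt_oddKernel (p : ℝ) (h : 0 < u ^ 2 + v ^ 2) :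
    HasDerivAt (oddKernel p · v) (oddKernelDeriv p u v) u := by
  simp only [oddKernel_eq_mul_rpow]
  refine ((hasDerivAt_id' u).fun_mul (hasDerivAt_sq_add_sq_rpow h (-p))).congr_deriv ?_
  rw [oddKernelDeriv, neg_add']
  ring

lemma hasDerivAt_oddKernelDeriv (p : ℝ) (h : 0 < u ^ 2 + v ^ 2) :
    HasDerivAt (oddKernelDeriv p · v) (oddKernelDeriv₂ p u v) u := by
  have h₂ := (hasDerivAt_pow 2 u).fun_mul (hasDerivAt_sq_add_sq_rpow h (-(p + 1)))
  refine ((hasDerivAt_sq_add_sq_rpow h (-p)).fun_sub (h₂.const_mul (2 * p))).congr_deriv ?_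
  rw [oddKernelDeriv₂, show -p - 1 = -(p + 1) by ring, show -(p + 1) - 1 = -(p + 2) by ring]
  push_cast
  ring

lemma continuousAt_oddKernelPotential (p : ℝ) {z : ℝ × ℝ} (hz : 0 < z.1 ^ 2 + z.2 ^ 2) :
    ContinuousAt (fun z : ℝ × ℝ => oddKernelPotential p z.1 z.2) z := by
  have hsq : ContinuousAt (fun z : ℝ × ℝ => z.1 ^ 2 + z.2 ^ 2) z := by fun_prop
  unfold oddKernelPotential
  split_ifs
  · exact (hsq.log hz.ne').div_const 2
  · exact (hsq.rpow_const (Or.inl hz.ne')).div_const _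

@[fun_prop]
lemma measurable_oddKernel (p : ℝ) : Measurable (fun z : ℝ × ℝ => oddKernel p z.1 z.2) := by
  unfold oddKernel; fun_prop

@[fun_prop]
lemma measurable_oddKernelPotential (p : ℝ) :
    Measurable (fun z : ℝ × ℝ => oddKernelPotential p z.1 z.2) := by
  unfold oddKernelPotential; split_ifs <;> fun_prop

@[fun_prop]
lemma measurable_oddKernelDeriv (p : ℝ) :
    Measurable (fun z : ℝ × ℝ => oddKernelDeriv p z.1 z.2) := by
  unfold oddKernelDeriv; fun_prop

@[fun_prop]
lemma measurable_oddKernelDeriv₂ (p : ℝ) :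
    Measurable (fun z : ℝ × ℝ => oddKernelDeriv₂ p z.1 z.2) := by
  unfold oddKernelDeriv₂; fun_prop

lemma abs_pow_mul_rpow_neg_le (hd : 0 < d) (h : d ^ 2 ≤ u ^ 2 + v ^ 2) {n : ℕ} {t : ℝ}
    (hn : n ≤ 2 * t) : |u| ^ n * (u ^ 2 + v ^ 2) ^ (-t) ≤ d ^ (n - 2 * t) := by
  set r := √(u ^ 2 + v ^ 2) with hr
  have hdr : d ≤ r := Real.le_sqrt_of_sq_le h
  have hr₀ : 0 < r := hd.trans_le hdr
  have hur : |u| ≤ r := Real.abs_le_sqrt (le_add_of_nonneg_right (sq_nonneg v))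
  have hrt : (u ^ 2 + v ^ 2) ^ (-t) = r ^ (-(2 * t)) := by
    rw [← Real.sq_sqrt (by positivity : 0 ≤ u ^ 2 + v ^ 2), ← hr, ← Real.rpow_natCast_mul hr₀.le]
    push_cast
    rw [mul_neg]
  calc |u| ^ n * (u ^ 2 + v ^ 2) ^ (-t) ≤ r ^ n * r ^ (-(2 * t)) := by rw [hrt]; gcongr
    _ = r ^ (n - 2 * t) := by rw [← Real.rpow_natCast, ← Real.rpow_add hr₀, sub_eq_add_neg]
    _ ≤ d ^ (n - 2 * t) := Real.rpow_le_rpow_of_nonpos hd hdr (by linarith)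

lemma abs_oddKernel_le (hp : 1 / 2 ≤ p) (hd : 0 < d) (h : d ^ 2 ≤ u ^ 2 + v ^ 2) :
    |oddKernel p u v| ≤ d ^ (1 - 2 * p) := by
  have hbound := abs_pow_mul_rpow_neg_le hd h (n := 1) (t := p) (by push_cast; linarith)
  rw [oddKernel_eq_mul_rpow, abs_mul, abs_of_nonneg (by positivity : 0 ≤ (u ^ 2 + v ^ 2) ^ (-p))]
  simpa using hbound

lemma abs_oddKernelDeriv_le (hp : 0 ≤ p) (hd : 0 < d) (h : d ^ 2 ≤ u ^ 2 + v ^ 2) :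
    |oddKernelDeriv p u v| ≤ (1 + 2 * p) * d ^ (-(2 * p)) := by
  have h₀ := abs_pow_mul_rpow_neg_le hd h (n := 0) (t := p) (by push_cast; linarith)
  have h₂ := abs_pow_mul_rpow_neg_le hd h (n := 2) (t := p + 1) (by push_cast; linarith)
  simp only [pow_zero, one_mul, Nat.cast_zero, zero_sub] at h₀
  rw [sq_abs, show ((2 : ℕ) : ℝ) - 2 * (p + 1) = -(2 * p) by push_cast; ring] at h₂
  calc |oddKernelDeriv p u v|
      ≤ |(u ^ 2 + v ^ 2) ^ (-p)| + |2 * p * (u ^ 2 * (u ^ 2 + v ^ 2) ^ (-(p + 1)))| := abs_sub _ _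
    _ = (u ^ 2 + v ^ 2) ^ (-p) + 2 * p * (u ^ 2 * (u ^ 2 + v ^ 2) ^ (-(p + 1))) := by
        rw [abs_of_nonneg (by positivity), abs_of_nonneg (by positivity)]
    _ ≤ d ^ (-(2 * p)) + 2 * p * d ^ (-(2 * p)) := by gcongr
    _ = (1 + 2 * p) * d ^ (-(2 * p)) := by ring

lemma abs_oddKernelDeriv₂_le (hp : 0 ≤ p) (hd : 0 < d) (h : d ^ 2 ≤ u ^ 2 + v ^ 2) :
    |oddKernelDeriv₂ p u v| ≤ (4 * p * (p + 1) + 6 * p) * d ^ (-(2 * p + 1)) := by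
  have h₁ := abs_pow_mul_rpow_neg_le hd h (n := 1) (t := p + 1) (by push_cast; linarith)
  have h₃ := abs_pow_mul_rpow_neg_le hd h (n := 3) (t := p + 2) (by push_cast; linarith)
  rw [pow_one, show ((1 : ℕ) : ℝ) - 2 * (p + 1) = -(2 * p + 1) by push_cast; ring] at h₁
  rw [show ((3 : ℕ) : ℝ) - 2 * (p + 2) = -(2 * p + 1) by push_cast; ring] at h₃
  have hs (t : ℝ) : |(u ^ 2 + v ^ 2) ^ t| = (u ^ 2 + v ^ 2) ^ t := abs_of_nonneg (by positivity)
  calc |oddKernelDeriv₂ p u v|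
      ≤ |4 * p * (p + 1) * (u ^ 3 * (u ^ 2 + v ^ 2) ^ (-(p + 2)))| +
          |6 * p * (u * (u ^ 2 + v ^ 2) ^ (-(p + 1)))| := abs_sub _ _
    _ = 4 * p * (p + 1) * (|u| ^ 3 * (u ^ 2 + v ^ 2) ^ (-(p + 2))) +
          6 * p * (|u| * (u ^ 2 + v ^ 2) ^ (-(p + 1))) := by
        rw [abs_mul (4 * p * (p + 1)), abs_mul (u ^ 3), abs_mul (6 * p), abs_mul u, abs_pow, hs, hs,
          abs_of_nonneg (by positivity : 0 ≤ 4 * p * (p + 1)),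
          abs_of_nonneg (by positivity : 0 ≤ 6 * p)]
    _ ≤ 4 * p * (p + 1) * d ^ (-(2 * p + 1)) + 6 * p * d ^ (-(2 * p + 1)) := by gcongr
    _ = (4 * p * (p + 1) + 6 * p) * d ^ (-(2 * p + 1)) := by ring

end Kernel

section DifferentiationUnderIntegral

/-- Boundedness of a function on the plane outside every disc around the origin; it provides the
domination for differentiating under the integral sign away from the singularity. -/
def BoundedOffOrigin (f : ℝ → ℝ → ℝ) : Prop :=
  ∀ r > 0, ∃ B, ∀ u v, r ^ 2 ≤ u ^ 2 + v ^ 2 → |f u v| ≤ B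

lemma boundedOffOrigin_oddKernel {p : ℝ} (hp : 1 / 2 ≤ p) : BoundedOffOrigin (oddKernel p) :=
  fun _ hr => ⟨_, fun _ _ => abs_oddKernel_le hp hr⟩

lemma boundedOffOrigin_oddKernelDeriv {p : ℝ} (hp : 0 ≤ p) :
    BoundedOffOrigin (oddKernelDeriv p) :=
  fun _ hr => ⟨_, fun _ _ => abs_oddKernelDeriv_le hp hr⟩

lemma boundedOffOrigin_oddKernelDeriv₂ {p : ℝ} (hp : 0 ≤ p) :
    BoundedOffOrigin (oddKernelDeriv₂ p) :=
  fun _ hr => ⟨_, fun _ _ => abs_oddKernelDeriv₂_le hp hr⟩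

variable {X : Type*} [MeasurableSpace X] {ν : Measure X} {S : Set X} {P Q : X → ℝ} {a d : ℝ}
  {f f' : ℝ → ℝ → ℝ}

lemma BoundedOffOrigin.integrableOn (hf : BoundedOffOrigin f)
    (hfm : Measurable fun z : ℝ × ℝ => f z.1 z.2) (hP : Measurable P) (hQ : Measurable Q)
    (hS : MeasurableSet S) (hνS : ν S ≠ ⊤) (hd : 0 < d)
    (hdist : ∀ x ∈ S, d ^ 2 ≤ (a - P x) ^ 2 + Q x ^ 2) :
    IntegrableOn (fun x => f (a - P x) (Q x)) S ν := by
  obtain ⟨B, hB⟩ := hf d hd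
  have hm : Measurable fun x => f (a - P x) (Q x) :=
    hfm.comp (f := fun x => (a - P x, Q x)) (by fun_prop)
  exact Measure.integrableOn_of_bounded hνS hm.aestronglyMeasurable
    (ae_restrict_of_forall_mem hS fun x hx => hB _ _ (hdist x hx))

lemma half_sq_le_of_abs_sub_le_half {x b u v : ℝ} (hxb : |x - b| ≤ d / 2)
    (h : d ^ 2 ≤ (b - u) ^ 2 + v ^ 2) : (d / 2) ^ 2 ≤ (x - u) ^ 2 + v ^ 2 := by
  have hxb' : (x - b) ^ 2 ≤ (d / 2) ^ 2 := sq_le_sq' (by linarith [abs_le.1 hxb]) (abs_le.1 hxb).2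
  nlinarith

lemma hasDerivAt_setIntegral_comp_sub
    (hff' : ∀ u v, 0 < u ^ 2 + v ^ 2 → HasDerivAt (f · v) (f' u v) u)
    (hf' : BoundedOffOrigin f') (hfm : Measurable fun z : ℝ × ℝ => f z.1 z.2)
    (hfm' : Measurable fun z : ℝ × ℝ => f' z.1 z.2) (hP : Measurable P) (hQ : Measurable Q)
    (hS : MeasurableSet S) (hνS : ν S ≠ ⊤) (hd : 0 < d)
    (hdist : ∀ x ∈ S, d ^ 2 ≤ (a - P x) ^ 2 + Q x ^ 2)
    (hint : IntegrableOn (fun x => f (a - P x) (Q x)) S ν) :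
    HasDerivAt (fun b => ∫ x in S, f (b - P x) (Q x) ∂ν) (∫ x in S, f' (a - P x) (Q x) ∂ν) a := by
  obtain ⟨B, hB⟩ := hf' (d / 2) (half_pos hd)
  have hdist' : ∀ x ∈ S, ∀ b ∈ Metric.ball a (d / 2), (d / 2) ^ 2 ≤ (b - P x) ^ 2 + Q x ^ 2 :=
    fun x hx b hb => half_sq_le_of_abs_sub_le_half (Metric.mem_ball.1 hb).le (hdist x hx)
  have hm (b : ℝ) : Measurable fun x => f (b - P x) (Q x) :=
    hfm.comp (f := fun x => (b - P x, Q x)) (by fun_prop)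
  have hm' : Measurable fun x => f' (a - P x) (Q x) :=
    hfm'.comp (f := fun x => (a - P x, Q x)) (by fun_prop)
  refine (hasDerivAt_integral_of_dominated_loc_of_deriv_le (bound := fun _ => B)
    (F := fun b x => f (b - P x) (Q x)) (F' := fun b x => f' (b - P x) (Q x))
    (Metric.ball_mem_nhds a (half_pos hd)) (.of_forall fun b => (hm b).aestronglyMeasurable) hint
    hm'.aestronglyMeasurable (ae_restrict_of_forall_mem hS fun x hx b hb => ?_)
    (integrableOn_const hνS) (ae_restrict_of_forall_mem hS fun x hx b hb => ?_)).2
  · exact hB _ _ (hdist' x hx b hb)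
  · exact (hff' _ _ ((by positivity : 0 < (d / 2) ^ 2).trans_le
      (hdist' x hx b hb))).comp_sub_const b (P x)

lemma hasDerivAt_setIntegral_oddKernel {p : ℝ} (hp : 1 / 2 ≤ p) (hP : Measurable P)
    (hQ : Measurable Q) (hS : MeasurableSet S) (hνS : ν S ≠ ⊤) (hd : 0 < d)
    (hdist : ∀ x ∈ S, d ^ 2 ≤ (a - P x) ^ 2 + Q x ^ 2) :
    HasDerivAt (fun b => ∫ x in S, oddKernel p (b - P x) (Q x) ∂ν)
      (∫ x in S, oddKernelDeriv p (a - P x) (Q x) ∂ν) a :=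
  hasDerivAt_setIntegral_comp_sub (fun _ _ => hasDerivAt_oddKernel p)
    (boundedOffOrigin_oddKernelDeriv (by linarith)) (measurable_oddKernel p)
    (measurable_oddKernelDeriv p) hP hQ hS hνS hd hdist
    ((boundedOffOrigin_oddKernel hp).integrableOn (measurable_oddKernel p) hP hQ hS hνS hd hdist)

end DifferentiationUnderIntegral

section PrincipalValue

/-- The closed disc of radius `|r|` around `(a, 0)` for the Euclidean norm; `Metric.closedBall` in
`ℝ × ℝ` refers to the sup norm. -/
def closedDisc (a r : ℝ) : Set (ℝ × ℝ) := {y | (y.1 - a) ^ 2 + y.2 ^ 2 ≤ r ^ 2}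

/-- The integral of `oddKernel p (a - y₁) y₂` over `S` exists as a principal value at `(a, 0)` and
equals `L`. -/
def HasPVIntegral (p : ℝ) (S : Set (ℝ × ℝ)) (a L : ℝ) : Prop :=
  Tendsto (fun ε => ∫ y in S \ closedDisc a ε, oddKernel p (a - y.1) y.2) (𝓝[>] 0) (𝓝 L)

variable {p a d ε L L₁ L₂ : ℝ} {S T : Set (ℝ × ℝ)}

lemma measurableSet_closedDisc (a r : ℝ) : MeasurableSet (closedDisc a r) :=
  measurableSet_le (by fun_prop) measurable_const

lemma sq_le_of_notMem_closedDisc {y : ℝ × ℝ} (hy : y ∉ closedDisc a ε) :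
    ε ^ 2 ≤ (a - y.1) ^ 2 + y.2 ^ 2 := by
  rw [← neg_sub, neg_sq]
  exact (not_le.1 hy).le

lemma volume_closedDisc_le {r : ℝ} (hr : 0 ≤ r) :
    volume (closedDisc a r) ≤ ENNReal.ofReal (4 * r ^ 2) := by
  have hsub : closedDisc a r ⊆ Icc (a - r) (a + r) ×ˢ Icc (-r) r := fun y hy => by
    rw [closedDisc, mem_ofPred_eq] at hy
    have h₁ := abs_le_of_sq_le_sq' (by nlinarith [sq_nonneg y.2] : (y.1 - a) ^ 2 ≤ r ^ 2) hr
    have h₂ := abs_le_of_sq_le_sq' (by nlinarith [sq_nonneg (y.1 - a)] : y.2 ^ 2 ≤ r ^ 2) hr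
    exact ⟨⟨by linarith, by linarith⟩, h₂⟩
  refine (measure_mono hsub).trans_eq ?_
  rw [Measure.volume_eq_prod, Measure.prod_prod, Real.volume_Icc, Real.volume_Icc,
    ← ENNReal.ofReal_mul (by linarith)]
  ring_nf

lemma integrableOn_oddKernel_sdiff_closedDisc (hp : 1 / 2 ≤ p) (hS : MeasurableSet S)
    (hvol : volume S ≠ ⊤) (a : ℝ) (hε : 0 < ε) :
    IntegrableOn (fun y => oddKernel p (a - y.1) y.2) (S \ closedDisc a ε) :=
  (boundedOffOrigin_oddKernel hp).integrableOn (measurable_oddKernel p) measurable_fst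
    measurable_snd (hS.diff (measurableSet_closedDisc a ε))
    (measure_ne_top_of_subset sdiff_subset hvol) hε fun _ hy => sq_le_of_notMem_closedDisc hy.2

lemma HasPVIntegral.union (hp : 1 / 2 ≤ p) (hS : MeasurableSet S) (hT : MeasurableSet T)
    (hvolS : volume S ≠ ⊤) (hvolT : volume T ≠ ⊤) (hST : Disjoint S T)
    (h₁ : HasPVIntegral p S a L₁) (h₂ : HasPVIntegral p T a L₂) :
    HasPVIntegral p (S ∪ T) a (L₁ + L₂) := by
  refine (Tendsto.add h₁ h₂).congr' ?_
  filter_upwards [self_mem_nhdsWithin] with ε hε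
  rw [union_sdiff_distrib, setIntegral_union (hST.mono sdiff_subset sdiff_subset)
    (hT.diff (measurableSet_closedDisc a ε))
    (integrableOn_oddKernel_sdiff_closedDisc hp hS hvolS a hε)
    (integrableOn_oddKernel_sdiff_closedDisc hp hT hvolT a hε)]

lemma HasPVIntegral.sdiff (hp : 1 / 2 ≤ p) (hS : MeasurableSet S) (hT : MeasurableSet T)
    (hvolS : volume S ≠ ⊤) (hTS : T ⊆ S)
    (h₁ : HasPVIntegral p S a L₁) (h₂ : HasPVIntegral p T a L₂) :
    HasPVIntegral p (S \ T) a (L₁ - L₂) := by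
  refine (Tendsto.sub h₁ h₂).congr' ?_
  filter_upwards [self_mem_nhdsWithin] with ε hε
  have hcancel : (S \ closedDisc a ε) \ (T \ closedDisc a ε) = (S \ T) \ closedDisc a ε := by
    grind
  rw [← setIntegral_sdiff (hT.diff (measurableSet_closedDisc a ε))
    (integrableOn_oddKernel_sdiff_closedDisc hp hS hvolS a hε) (sdiff_subset_sdiff_left hTS),
    hcancel]

lemma hasPVIntegral_of_sq_le (hd : 0 < d) (hdist : ∀ y ∈ S, d ^ 2 ≤ (a - y.1) ^ 2 + y.2 ^ 2) :
    HasPVIntegral p S a (∫ y in S, oddKernel p (a - y.1) y.2) := by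
  refine tendsto_const_nhds.congr' ?_
  filter_upwards [Ioo_mem_nhdsGT hd] with ε hε
  have hdisj : Disjoint S (closedDisc a ε) := disjoint_left.2 fun y hy hy' => by
    have := hdist y hy
    rw [closedDisc, mem_ofPred_eq, ← neg_sub, neg_sq] at hy'
    nlinarith [hε.1, hε.2]
  rw [hdisj.sdiff_eq_left]

end PrincipalValue

section SecondDerivative

/-- On `I`, the principal value integral over `S` of `oddKernel p` around `(a, 0)` exists and is a
twice differentiable function of `a`, whose second derivative is within `B a` of `G a`. -/
def HasPVSecondDerivNear (p : ℝ) (S : Set (ℝ × ℝ)) (I : Set ℝ) (G B : ℝ → ℝ) : Prop :=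
  ∃ V : ℝ → ℝ, (∀ a ∈ I, HasPVIntegral p S a (V a)) ∧ ∃ V' V'' : ℝ → ℝ, ∀ a ∈ I,
    HasDerivWithinAt V (V' a) I a ∧ HasDerivWithinAt V' (V'' a) I a ∧ |V'' a - G a| ≤ B a

namespace HasPVSecondDerivNear

variable {p : ℝ} {S T : Set (ℝ × ℝ)} {I J : Set ℝ} {G G₁ G₂ B B₁ B₂ : ℝ → ℝ}

lemma mono_set (h : HasPVSecondDerivNear p S J G B) (hIJ : I ⊆ J) :
    HasPVSecondDerivNear p S I G B := by
  obtain ⟨V, hV, V', V'', hV'⟩ := h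
  refine ⟨V, fun a ha => hV a (hIJ ha), V', V'', fun a ha => ?_⟩
  obtain ⟨h₁, h₂, hb⟩ := hV' a (hIJ ha)
  exact ⟨h₁.mono hIJ, h₂.mono hIJ, hb⟩

lemma mono_bound (h : HasPVSecondDerivNear p S I G B₁) (hB : ∀ a ∈ I, B₁ a ≤ B₂ a) :
    HasPVSecondDerivNear p S I G B₂ := by
  obtain ⟨V, hV, V', V'', hV'⟩ := h
  refine ⟨V, hV, V', V'', fun a ha => ?_⟩
  obtain ⟨h₁, h₂, hb⟩ := hV' a ha
  exact ⟨h₁, h₂, hb.trans (hB a ha)⟩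

lemma union (hp : 1 / 2 ≤ p) (hS : MeasurableSet S) (hT : MeasurableSet T)
    (hvolS : volume S ≠ ⊤) (hvolT : volume T ≠ ⊤) (hST : Disjoint S T)
    (h₁ : HasPVSecondDerivNear p S I G₁ B₁) (h₂ : HasPVSecondDerivNear p T I G₂ B₂) :
    HasPVSecondDerivNear p (S ∪ T) I (G₁ + G₂) (B₁ + B₂) := by
  obtain ⟨V, hV, V', V'', hV'⟩ := h₁
  obtain ⟨W, hW, W', W'', hW'⟩ := h₂
  refine ⟨V + W, fun a ha => (hV a ha).union hp hS hT hvolS hvolT hST (hW a ha), V' + W',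
    V'' + W'', fun a ha => ?_⟩
  obtain ⟨hv, hv', hvb⟩ := hV' a ha
  obtain ⟨hw, hw', hwb⟩ := hW' a ha
  refine ⟨hv.add hw, hv'.add hw', ?_⟩
  simp only [Pi.add_apply]
  rw [add_sub_add_comm]
  exact (abs_add_le _ _).trans (add_le_add hvb hwb)

lemma sdiff (hp : 1 / 2 ≤ p) (hS : MeasurableSet S) (hT : MeasurableSet T)
    (hvolS : volume S ≠ ⊤) (hTS : T ⊆ S)
    (h₁ : HasPVSecondDerivNear p S I G₁ B₁) (h₂ : HasPVSecondDerivNear p T I G₂ B₂) :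
    HasPVSecondDerivNear p (S \ T) I (G₁ - G₂) (B₁ + B₂) := by
  obtain ⟨V, hV, V', V'', hV'⟩ := h₁
  obtain ⟨W, hW, W', W'', hW'⟩ := h₂
  refine ⟨V - W, fun a ha => (hV a ha).sdiff hp hS hT hvolS hTS (hW a ha), V' - W',
    V'' - W'', fun a ha => ?_⟩
  obtain ⟨hv, hv', hvb⟩ := hV' a ha
  obtain ⟨hw, hw', hwb⟩ := hW' a ha
  refine ⟨hv.sub hw, hv'.sub hw', ?_⟩
  simp only [Pi.sub_apply, Pi.add_apply]
  rw [sub_sub_sub_comm]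
  exact (abs_sub _ _).trans (add_le_add hvb hwb)

end HasPVSecondDerivNear

lemma hasPVSecondDerivNear_of_sq_le {p m : ℝ} {S : Set (ℝ × ℝ)} {I : Set ℝ} {d : ℝ → ℝ}
    (hp : 1 / 2 ≤ p) (hm : 0 ≤ m) (hS : MeasurableSet S) (hvol : volume S ≤ ENNReal.ofReal m)
    (hd : ∀ a ∈ I, 0 < d a) (hdist : ∀ a ∈ I, ∀ y ∈ S, d a ^ 2 ≤ (a - y.1) ^ 2 + y.2 ^ 2) :
    HasPVSecondDerivNear p S I 0
      (fun a => (4 * p * (p + 1) + 6 * p) * d a ^ (-(2 * p + 1)) * m) := by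
  have hp₀ : 0 ≤ p := by linarith
  have hvol' : volume S ≠ ⊤ := ne_top_of_le_ne_top ENNReal.ofReal_ne_top hvol
  refine ⟨_, fun a ha => hasPVIntegral_of_sq_le (hd a ha) (hdist a ha),
    fun a => ∫ y in S, oddKernelDeriv p (a - y.1) y.2,
    fun a => ∫ y in S, oddKernelDeriv₂ p (a - y.1) y.2, fun a ha => ⟨?_, ?_, ?_⟩⟩
  · exact (hasDerivAt_setIntegral_oddKernel hp measurable_fst measurable_snd hS hvol' (hd a ha)
      (hdist a ha)).hasDerivWithinAt
  · exact (hasDerivAt_setIntegral_comp_sub (fun _ _ => hasDerivAt_oddKernelDeriv p)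
      (boundedOffOrigin_oddKernelDeriv₂ hp₀) (measurable_oddKernelDeriv p)
      (measurable_oddKernelDeriv₂ p) measurable_fst measurable_snd hS hvol' (hd a ha) (hdist a ha)
      ((boundedOffOrigin_oddKernelDeriv hp₀).integrableOn (measurable_oddKernelDeriv p)
        measurable_fst measurable_snd hS hvol' (hd a ha) (hdist a ha))).hasDerivWithinAt
  · have hvol_real : volume.real S ≤ m := ENNReal.toReal_le_of_le_ofReal hm hvol
    have hconst : 0 ≤ (4 * p * (p + 1) + 6 * p) * d a ^ (-(2 * p + 1)) :=
      mul_nonneg (by positivity) (Real.rpow_nonneg (hd a ha).le _)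
    have hbound : ∀ y ∈ S, ‖oddKernelDeriv₂ p (a - y.1) y.2‖ ≤
        (4 * p * (p + 1) + 6 * p) * d a ^ (-(2 * p + 1)) :=
      fun y hy => abs_oddKernelDeriv₂_le hp₀ (hd a ha) (hdist a ha y hy)
    rw [Pi.zero_apply, sub_zero]
    exact (norm_setIntegral_le_of_norm_le_const hvol'.lt_top hbound).trans
      (mul_le_mul_of_nonneg_left hvol_real hconst)

end SecondDerivative

section HalfLine

variable {p a β : ℝ}

lemma sq_add_one_mul_sq_add_sq (a β y : ℝ) :
    (β ^ 2 + 1) * ((a - β * y) ^ 2 + y ^ 2) = a ^ 2 + ((β ^ 2 + 1) * y - a * β) ^ 2 := by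
  ring

lemma div_sqrt_sq_le (a β y : ℝ) : (a / √(β ^ 2 + 1)) ^ 2 ≤ (a - β * y) ^ 2 + y ^ 2 := by
  rw [div_pow, Real.sq_sqrt (by positivity), div_le_iff₀' (by positivity),
    sq_add_one_mul_sq_add_sq]
  exact le_add_of_nonneg_right (sq_nonneg _)

lemma sq_sub_mul_add_sq_pos (ha : 0 < a) (β y : ℝ) : 0 < (a - β * y) ^ 2 + y ^ 2 :=
  (by positivity : 0 < (a / √(β ^ 2 + 1)) ^ 2).trans_le (div_sqrt_sq_le a β y)

lemma hasDerivAt_integral_cos_rpow {t : ℝ} (ht : 0 ≤ t) (θ₀ θ : ℝ) :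
    HasDerivAt (fun θ => ∫ s in θ₀..θ, Real.cos s ^ t) (Real.cos θ ^ t) θ :=
  ((Real.continuous_cos.rpow_const fun _ => Or.inr ht).integral_hasStrictDerivAt _ _).hasDerivAt

lemma cos_arctan_rpow_mul (x : ℝ) (p : ℝ) :
    Real.cos (Real.arctan x) ^ (2 * p - 2) * (1 / (1 + x ^ 2)) = (1 + x ^ 2) ^ (-p) := by
  have h : (0 : ℝ) < 1 + x ^ 2 := by positivity
  rw [Real.cos_arctan, Real.sqrt_eq_rpow, one_div, one_div (1 + x ^ 2), ← Real.rpow_neg h.le,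
    ← Real.rpow_mul h.le, ← Real.rpow_neg_one (1 + x ^ 2), ← Real.rpow_add h]
  ring_nf

-- Substitute `θ = arctan ((β² + 1) y / a - β)`, the angle at `(a, 0)` measured from the normal
-- of the ray.
lemma hasDerivAt_integral_cos_rpow_arctan (hp : 1 ≤ p) (ha : 0 < a) (y : ℝ) :
    HasDerivAt (fun y => a ^ (1 - 2 * p) * (β ^ 2 + 1) ^ (p - 1) *
      ∫ θ in (-Real.arctan β)..(Real.arctan ((β ^ 2 + 1) * y / a - β)), Real.cos θ ^ (2 * p - 2))
      (((a - β * y) ^ 2 + y ^ 2) ^ (-p)) y := by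
  set q := β ^ 2 + 1
  have hq₀ : 0 < q := by positivity
  have hx : HasDerivAt (fun y => q * y / a - β) (q / a) y := by
    simpa using (((hasDerivAt_id y).const_mul q).div_const a).sub_const β
  have hS : 1 + (q * y / a - β) ^ 2 = q / a ^ 2 * ((a - β * y) ^ 2 + y ^ 2) := by
    have := sq_add_one_mul_sq_add_sq a β y
    field_simp
    linear_combination -this
  have hS₀ := sq_sub_mul_add_sq_pos ha β y
  refine (((hasDerivAt_integral_cos_rpow (by linarith) _ _).comp y hx.arctan).const_mul
    _).congr_deriv ?_
  have hconst : a ^ (1 - 2 * p) * q ^ (p - 1) * ((q / a ^ 2) ^ (-p) * (q / a)) = 1 := by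
    rw [Real.div_rpow hq₀.le (by positivity), ← Real.rpow_natCast_mul ha.le, Real.rpow_sub ha,
      Real.rpow_sub hq₀, Real.rpow_neg hq₀.le, mul_neg, Real.rpow_neg ha.le, Real.rpow_one,
      Real.rpow_one]
    push_cast
    field_simp
  rw [← mul_assoc (Real.cos _ ^ _), cos_arctan_rpow_mul, hS, Real.mul_rpow (by positivity) hS₀.le]
  linear_combination ((a - β * y) ^ 2 + y ^ 2) ^ (-p) * hconst

lemma tendsto_integral_cos_rpow_arctan (hp : 1 ≤ p) (ha : 0 < a) (β : ℝ) :
    Tendsto (fun y => a ^ (1 - 2 * p) * (β ^ 2 + 1) ^ (p - 1) *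
      ∫ θ in (-Real.arctan β)..(Real.arctan ((β ^ 2 + 1) * y / a - β)), Real.cos θ ^ (2 * p - 2))
      atTop (𝓝 (a ^ (1 - 2 * p) * (β ^ 2 + 1) ^ (p - 1) *
        ∫ θ in (-Real.arctan β)..(Real.pi / 2), Real.cos θ ^ (2 * p - 2))) := by
  have hx : Tendsto (fun y => (β ^ 2 + 1) * y / a - β) atTop atTop :=
    tendsto_atTop_add_const_right _ _
      ((tendsto_id.const_mul_atTop (by positivity)).atTop_div_const ha)
  exact ((hasDerivAt_integral_cos_rpow (by linarith) _ _).continuousAt.tendsto.comp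
    ((Real.tendsto_arctan_atTop.mono_right nhdsWithin_le_nhds).comp hx)).const_mul _

lemma integrableOn_Ioi_rpow_neg (hp : 1 ≤ p) (ha : 0 < a) (β : ℝ) :
    IntegrableOn (fun y => ((a - β * y) ^ 2 + y ^ 2) ^ (-p)) (Ioi 0) :=
  integrableOn_Ioi_deriv_of_nonneg' (fun y _ => hasDerivAt_integral_cos_rpow_arctan hp ha y)
    (fun _ _ => by positivity) (tendsto_integral_cos_rpow_arctan hp ha β)

lemma integral_Ioi_rpow_neg (hp : 1 ≤ p) (ha : 0 < a) (β : ℝ) :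
    ∫ y in Ioi 0, ((a - β * y) ^ 2 + y ^ 2) ^ (-p) = a ^ (1 - 2 * p) * (β ^ 2 + 1) ^ (p - 1) *
      ∫ θ in (-Real.arctan β)..(Real.pi / 2), Real.cos θ ^ (2 * p - 2) := by
  rw [integral_Ioi_of_hasDerivAt_of_nonneg'
    (fun y _ => hasDerivAt_integral_cos_rpow_arctan hp ha y) (fun _ _ => by positivity)
    (tendsto_integral_cos_rpow_arctan hp ha β)]
  simp [Real.arctan_neg]

lemma integrableOn_Ioi_oddKernelDeriv (hp : 1 ≤ p) (ha : 0 < a) (β : ℝ) :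
    IntegrableOn (fun y => oddKernelDeriv p (a - β * y) y) (Ioi 0) := by
  have hm : Measurable fun y => oddKernelDeriv p (a - β * y) y :=
    (measurable_oddKernelDeriv p).comp (f := fun y => (a - β * y, y)) (by fun_prop)
  refine ((integrableOn_Ioi_rpow_neg hp ha β).const_mul (1 + 2 * p)).mono'
    hm.aestronglyMeasurable (.of_forall fun y => ?_)
  have hS := sq_sub_mul_add_sq_pos ha β y
  refine (abs_oddKernelDeriv_le (by linarith) (Real.sqrt_pos.2 hS)
    (Real.sq_sqrt hS.le).le).trans_eq ?_
  rw [Real.sqrt_eq_rpow, ← Real.rpow_mul hS.le]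
  ring_nf

-- The field `(u, v) / |(u, v)| ^ (2 * p)` is curl-free with divergence
-- `(2 - 2 * p) / |(u, v)| ^ (2 * p)`, so the `u`-derivative of its first component differs from a
-- derivative along the ray only by a multiple of `|(u, v)| ^ (-2 * p)`.
lemma hasDerivAt_oddKernel_ray (ha : 0 < a) (p y : ℝ) :
    HasDerivAt (fun y => -(oddKernel p y (a - β * y) + β * oddKernel p (a - β * y) y) / (β ^ 2 + 1))
      (oddKernelDeriv p (a - β * y) y +
        (2 * p - 2) / (β ^ 2 + 1) * ((a - β * y) ^ 2 + y ^ 2) ^ (-p)) y := by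
  have hS := sq_sub_mul_add_sq_pos ha β y
  have hu : HasDerivAt (fun y => a - β * y) (-β) y := by
    simpa using ((hasDerivAt_id y).const_mul β).const_sub a
  have hSp : HasDerivAt (fun y => ((a - β * y) ^ 2 + y ^ 2) ^ (-p)) _ y :=
    ((hu.fun_pow 2).fun_add (hasDerivAt_pow 2 y)).rpow_const (Or.inl hS.ne')
  have hlin := (hasDerivAt_id' y).fun_add (hu.const_mul β)
  have heq (y : ℝ) : oddKernel p y (a - β * y) + β * oddKernel p (a - β * y) y =
      (y + β * (a - β * y)) * ((a - β * y) ^ 2 + y ^ 2) ^ (-p) := by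
    rw [oddKernel_eq_mul_rpow, oddKernel_eq_mul_rpow, add_comm (y ^ 2)]
    ring
  simp only [heq]
  refine ((hlin.fun_mul hSp).fun_neg.div_const _).congr_deriv ?_
  have hpow : ((a - β * y) ^ 2 + y ^ 2) ^ (-p) =
      ((a - β * y) ^ 2 + y ^ 2) * ((a - β * y) ^ 2 + y ^ 2) ^ (-(p + 1)) := by
    rw [show -p = 1 + -(p + 1) by ring, Real.rpow_add hS, Real.rpow_one]
  rw [oddKernelDeriv, ← neg_add', hpow]
  push_cast
  field_simp
  ring

lemma tendsto_oddKernel_ray (hp : 1 / 2 < p) (a β : ℝ) :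
    Tendsto (fun y => -(oddKernel p y (a - β * y) + β * oddKernel p (a - β * y) y) / (β ^ 2 + 1))
      atTop (𝓝 0) := by
  have hdecay : Tendsto (fun y : ℝ => y ^ (1 - 2 * p)) atTop (𝓝 0) := by
    simpa using tendsto_rpow_neg_atTop (y := 2 * p - 1) (by linarith)
  have h₁ : Tendsto (fun y => oddKernel p y (a - β * y)) atTop (𝓝 0) := by
    refine squeeze_zero_norm' ?_ hdecay
    filter_upwards [eventually_gt_atTop 0] with y hy
    exact abs_oddKernel_le hp.le hy (le_add_of_nonneg_right (sq_nonneg _))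
  have h₂ : Tendsto (fun y => oddKernel p (a - β * y) y) atTop (𝓝 0) := by
    refine squeeze_zero_norm' ?_ hdecay
    filter_upwards [eventually_gt_atTop 0] with y hy
    exact abs_oddKernel_le hp.le hy (le_add_of_nonneg_left (sq_nonneg _))
  simpa using (h₁.add (h₂.const_mul β)).neg.div_const (β ^ 2 + 1)

lemma integral_Ioi_oddKernelDeriv (hp : 1 ≤ p) (ha : 0 < a) (β : ℝ) :
    ∫ y in Ioi 0, oddKernelDeriv p (a - β * y) y =
      a ^ (1 - 2 * p) * (β / (β ^ 2 + 1) - (2 * p - 2) / (β ^ 2 + 1) * ((β ^ 2 + 1) ^ (p - 1) *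
        ∫ θ in (-Real.arctan β)..(Real.pi / 2), Real.cos θ ^ (2 * p - 2))) := by
  have hint := integrableOn_Ioi_oddKernelDeriv hp ha β
  have hint' := (integrableOn_Ioi_rpow_neg hp ha β).const_mul ((2 * p - 2) / (β ^ 2 + 1))
  have hsum := integral_Ioi_of_hasDerivAt_of_tendsto'
    (fun y (_ : y ∈ Ici 0) => hasDerivAt_oddKernel_ray (β := β) ha p y) (hint.add hint')
    (tendsto_oddKernel_ray (by linarith) a β)
  have hzero : oddKernel p a 0 = a ^ (1 - 2 * p) := by
    rw [oddKernel, zero_pow two_ne_zero, add_zero, ← Real.rpow_natCast_mul ha.le, Nat.cast_ofNat,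
      Real.rpow_sub ha, Real.rpow_one]
  have hzero' : oddKernel p 0 a = 0 := by simp [oddKernel]
  rw [integral_add hint hint', integral_const_mul, integral_Ioi_rpow_neg hp ha, mul_zero, sub_zero,
    hzero, hzero'] at hsum
  linear_combination hsum

lemma integral_Ioi_oddKernelDeriv_eq_F {α : ℝ} (hα : 0 ≤ α) (ha : 0 < a) (β : ℝ) :
    ∫ y in Ioi 0, oddKernelDeriv (1 + α / 2) (a - β * y) y = F α β / a ^ (1 + α) := by
  have hq : 0 < β ^ 2 + 1 := by positivity
  have hpow : (β ^ 2 + 1) ^ (α / 2) / (β ^ 2 + 1) = 1 / (β ^ 2 + 1) ^ (1 - α / 2) := by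
    rw [Real.rpow_sub hq, Real.rpow_one, one_div_div]
  rw [integral_Ioi_oddKernelDeriv (by linarith) ha, F, show 1 - 2 * (1 + α / 2) = -(1 + α) by ring,
    show 2 * (1 + α / 2) - 2 = α by ring, add_sub_cancel_left, Real.rpow_neg ha.le]
  linear_combination (-α * (a ^ (1 + α))⁻¹ *
    ∫ θ in (-Real.arctan β)..(Real.pi / 2), Real.cos θ ^ α) * hpow

end HalfLine

section Wedge

lemma setIntegral_eq_integral_setIntegral_snd {f : ℝ × ℝ → ℝ} {S : Set (ℝ × ℝ)}
    (hS : MeasurableSet S) (hf : IntegrableOn f S) :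
    ∫ z in S, f z = ∫ y, ∫ x in {x | (x, y) ∈ S}, f (x, y) := by
  rw [← integral_indicator hS, Measure.volume_eq_prod,
    integral_prod_symm _ ((integrable_indicator_iff hS).2 hf)]
  refine integral_congr_ae (.of_forall fun y => ?_)
  exact integral_indicator (f := fun x => f (x, y)) (measurable_prodMk_right hS)

lemma integral_oddKernel_chord (p a v ε : ℝ) :
    ∫ x in {x | (x - a) ^ 2 + v ^ 2 ≤ ε ^ 2}, oddKernel p (a - x) v = 0 := by
  have hmeas : MeasurableSet {u : ℝ | u ^ 2 + v ^ 2 ≤ ε ^ 2} :=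
    measurableSet_le (by fun_prop) measurable_const
  have hmeas' : MeasurableSet {x : ℝ | (x - a) ^ 2 + v ^ 2 ≤ ε ^ 2} :=
    measurableSet_le (by fun_prop) measurable_const
  have hcenter : ∫ x in {x | (x - a) ^ 2 + v ^ 2 ≤ ε ^ 2}, oddKernel p (a - x) v =
      ∫ u in {u | u ^ 2 + v ^ 2 ≤ ε ^ 2}, oddKernel p u v := by
    rw [← integral_indicator hmeas, ← integral_indicator hmeas',
      ← integral_sub_left_eq_self _ _ a]
    simp only [indicator_apply, mem_ofPred_eq, sub_sub_cancel, sub_sq_comm _ a]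
  have hodd : ∫ u in {u | u ^ 2 + v ^ 2 ≤ ε ^ 2}, oddKernel p u v =
      -∫ u in {u | u ^ 2 + v ^ 2 ≤ ε ^ 2}, oddKernel p u v := by
    conv_lhs => rw [← integral_indicator hmeas, ← integral_neg_eq_self]
    rw [← integral_indicator hmeas, ← integral_neg]
    simp only [indicator_apply, mem_ofPred_eq, neg_sq, oddKernel_neg]
    congr 1 with u
    split_ifs <;> simp
  rw [hcenter]
  linarith

lemma integral_oddKernel_sdiff_chord {a b c v ε : ℝ} (p : ℝ) (hv : 0 < v) (hbc : b ≤ c)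
    (hchord : {x | (x - a) ^ 2 + v ^ 2 ≤ ε ^ 2} ⊆ Ioc b c) :
    ∫ x in Ioc b c \ {x | (x - a) ^ 2 + v ^ 2 ≤ ε ^ 2}, oddKernel p (a - x) v =
      oddKernelPotential p (a - b) v - oddKernelPotential p (a - c) v := by
  have hderiv (x : ℝ) :
      HasDerivAt (fun x => -oddKernelPotential p (a - x) v) (oddKernel p (a - x) v) x := by
    simpa using ((hasDerivAt_oddKernelPotential p (by positivity)).comp_const_sub a x).fun_neg
  have hcont : Continuous fun x => oddKernel p (a - x) v := continuous_iff_continuousAt.2 fun x =>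
    ((hasDerivAt_oddKernel p (by positivity)).comp_const_sub a x).continuousAt
  rw [setIntegral_sdiff (measurableSet_le (by fun_prop) measurable_const)
    hcont.integrableOn_Ioc hchord, integral_oddKernel_chord, sub_zero,
    ← intervalIntegral.integral_of_le hbc,
    intervalIntegral.integral_eq_sub_of_hasDerivAt (fun x _ => hderiv x)
      (hcont.intervalIntegrable b c)]
  ring

/-- The sector `β y₂ < y₁` of the first quadrant, cut off by the square `[-M, M]²`. -/
def truncatedWedge (β M : ℝ) : Set (ℝ × ℝ) :=
  {y | 0 < y.2 ∧ y.2 ≤ M ∧ β * y.2 < y.1 ∧ y.1 ≤ M}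

/-- The supremum of the ordinates of the points of `truncatedWedge β M`. -/
noncomputable def wedgeHeight (β M : ℝ) : ℝ := M / max 1 β

variable {p a β M : ℝ}

lemma lt_max_one (β : ℝ) : 0 < max 1 β := zero_lt_one.trans_le (le_max_left 1 β)

lemma max_one_mul_wedgeHeight (β M : ℝ) : max 1 β * wedgeHeight β M = M :=
  mul_div_cancel₀ M (lt_max_one β).ne'

lemma wedgeHeight_nonneg (hM : 0 ≤ M) : 0 ≤ wedgeHeight β M := div_nonneg hM (lt_max_one β).le

lemma wedgeHeight_le (hM : 0 ≤ M) : wedgeHeight β M ≤ M := div_le_self hM (le_max_left 1 β)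

lemma le_wedgeHeight_iff {y : ℝ} (hy : 0 ≤ y) : y ≤ wedgeHeight β M ↔ y ≤ M ∧ β * y ≤ M := by
  rw [wedgeHeight, le_div_iff₀' (lt_max_one β), max_mul_of_nonneg _ _ hy, one_mul, max_le_iff]

lemma measurableSet_truncatedWedge (β M : ℝ) : MeasurableSet (truncatedWedge β M) := by
  unfold truncatedWedge
  measurability

lemma truncatedWedge_subset_square (hβ : 0 ≤ β) (M : ℝ) :
    truncatedWedge β M ⊆ Icc (-M) M ×ˢ Icc (-M) M := fun y ⟨h₂, h₂', h₁, h₁'⟩ => by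
  have h₀ : 0 ≤ β * y.2 := mul_nonneg hβ h₂.le
  exact ⟨⟨by linarith, h₁'⟩, ⟨by linarith, h₂'⟩⟩

lemma volume_truncatedWedge_ne_top (hβ : 0 ≤ β) (M : ℝ) : volume (truncatedWedge β M) ≠ ⊤ :=
  measure_ne_top_of_subset (truncatedWedge_subset_square hβ M)
    (isCompact_Icc.prod isCompact_Icc).measure_ne_top

lemma chord_subset_Ioc {y ε : ℝ} (hβ : 0 ≤ β) (hy : 0 < y) (hε : 0 < ε) (hεa : (1 + β) * ε < a)
    (hεM : a + ε ≤ M) : {x | (x - a) ^ 2 + y ^ 2 ≤ ε ^ 2} ⊆ Ioc (β * y) M := by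
  intro x hx
  have hx' := abs_le_of_sq_le_sq' (by nlinarith [hx.out] : (x - a) ^ 2 ≤ ε ^ 2) hε.le
  have hyε : y ≤ ε := (sq_le_sq₀ hy.le hε.le).1 (by nlinarith [hx.out])
  have hβy : β * y ≤ β * ε := by gcongr
  exact ⟨by linarith, by linarith⟩

lemma integral_truncatedWedge_sdiff_closedDisc {ε : ℝ} (hp : 1 / 2 ≤ p) (hβ : 0 ≤ β)
    (hε : 0 < ε) (hεa : (1 + β) * ε < a) (hεM : a + ε ≤ M) :
    ∫ z in truncatedWedge β M \ closedDisc a ε, oddKernel p (a - z.1) z.2 =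
      ∫ y in Ioc 0 (wedgeHeight β M),
        (oddKernelPotential p (a - β * y) y - oddKernelPotential p (a - M) y) := by
  rw [setIntegral_eq_integral_setIntegral_snd
    ((measurableSet_truncatedWedge β M).diff (measurableSet_closedDisc a ε))
    (integrableOn_oddKernel_sdiff_closedDisc hp (measurableSet_truncatedWedge β M)
      (volume_truncatedWedge_ne_top hβ M) a hε)]
  have hempty : ∀ y ∉ Ioc 0 (wedgeHeight β M),
      {x | (x, y) ∈ truncatedWedge β M \ closedDisc a ε} = ∅ := by
    refine fun y hy => eq_empty_of_forall_notMem fun x ⟨⟨h₂, h₂', h₁, h₁'⟩, _⟩ => hy ⟨h₂, ?_⟩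
    exact (le_wedgeHeight_iff h₂.le).2 ⟨h₂', h₁.le.trans h₁'⟩
  have hslice : ∀ y ∈ Ioc 0 (wedgeHeight β M),
      {x | (x, y) ∈ truncatedWedge β M \ closedDisc a ε} =
        Ioc (β * y) M \ {x | (x - a) ^ 2 + y ^ 2 ≤ ε ^ 2} := by
    intro y hy
    obtain ⟨hyM, -⟩ := (le_wedgeHeight_iff hy.1.le).1 hy.2
    ext x
    simp [truncatedWedge, closedDisc, hy.1, hyM]
  rw [← setIntegral_eq_integral_of_forall_compl_eq_zero (s := Ioc 0 (wedgeHeight β M))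
    fun y hy => by rw [hempty y hy, setIntegral_empty]]
  refine setIntegral_congr_fun measurableSet_Ioc fun y hy => ?_
  simp only [hslice y hy]
  exact integral_oddKernel_sdiff_chord p hy.1 ((le_wedgeHeight_iff hy.1.le).1 hy.2).2
    (chord_subset_Ioc hβ hy.1 hε hεa hεM)

lemma integrableOn_oddKernelPotential_comp_sub {P : ℝ → ℝ} (hP : Continuous P)
    (hpos : ∀ y, 0 < (a - P y) ^ 2 + y ^ 2) (p H : ℝ) :
    IntegrableOn (fun y => oddKernelPotential p (a - P y) y) (Ioc 0 H) := by
  have hcont : Continuous fun y => oddKernelPotential p (a - P y) y :=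
    continuous_iff_continuousAt.2 fun y =>
      (continuousAt_oddKernelPotential p (z := (a - P y, y)) (hpos y)).comp
        (f := fun y => (a - P y, y)) (by fun_prop)
  exact hcont.integrableOn_Ioc

lemma hasDerivAt_setIntegral_oddKernelPotential {P : ℝ → ℝ} {d : ℝ} (hp : 1 / 2 ≤ p)
    (hP : Continuous P) (hd : 0 < d) (hdist : ∀ y, d ^ 2 ≤ (a - P y) ^ 2 + y ^ 2) (H : ℝ) :
    HasDerivAt (fun b => ∫ y in Ioc 0 H, oddKernelPotential p (b - P y) y)
      (∫ y in Ioc 0 H, oddKernel p (a - P y) y) a :=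
  hasDerivAt_setIntegral_comp_sub (fun _ _ => hasDerivAt_oddKernelPotential p)
    (boundedOffOrigin_oddKernel hp) (measurable_oddKernelPotential p) (measurable_oddKernel p)
    hP.measurable measurable_id measurableSet_Ioc measure_Ioc_lt_top.ne hd (fun y _ => hdist y)
    (integrableOn_oddKernelPotential_comp_sub hP
      (fun y => (by positivity : 0 < d ^ 2).trans_le (hdist y)) p H)

lemma hasPVIntegral_truncatedWedge (hp : 1 / 2 ≤ p) (hβ : 0 ≤ β) (ha : 0 < a) (haM : a < M) :
    HasPVIntegral p (truncatedWedge β M) a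
      ((∫ y in Ioc 0 (wedgeHeight β M), oddKernelPotential p (a - β * y) y) -
        ∫ y in Ioc 0 (wedgeHeight β M), oddKernelPotential p (a - M) y) := by
  have haM' : 0 < (a - M) ^ 2 := sq_pos_of_neg (sub_neg.2 haM)
  refine tendsto_const_nhds.congr' ?_
  filter_upwards [Ioo_mem_nhdsGT (lt_min (div_pos ha (by positivity : 0 < 1 + β))
    (sub_pos.2 haM))] with ε hε
  obtain ⟨hεa, hεM⟩ := lt_min_iff.1 hε.2
  rw [integral_truncatedWedge_sdiff_closedDisc hp hβ hε.1 ((lt_div_iff₀' (by positivity)).1 hεa)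
    (by linarith), integral_sub]
  · exact integrableOn_oddKernelPotential_comp_sub (by fun_prop) (sq_sub_mul_add_sq_pos ha β) p _
  · exact integrableOn_oddKernelPotential_comp_sub continuous_const
      (fun y => add_pos_of_pos_of_nonneg haM' (sq_nonneg y)) p _

lemma max_one_mul_half_sq_le {y : ℝ} (ha : 0 < a) (haM : a ≤ M / 2)
    (hy : wedgeHeight β M < y) : (max 1 β * (y / 2)) ^ 2 ≤ (a - β * y) ^ 2 + y ^ 2 := by
  have hy₀ : 0 < y := (wedgeHeight_nonneg (by linarith)).trans_lt hy
  rcases le_total β 1 with hβ₁ | hβ₁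
  · rw [max_eq_left hβ₁]
    nlinarith [sq_nonneg (a - β * y)]
  · have hMy : M < β * y := by
      rw [wedgeHeight, max_eq_right hβ₁, div_lt_iff₀' (by positivity)] at hy
      exact hy
    rw [max_eq_right hβ₁]
    nlinarith [sq_nonneg y]

lemma abs_integral_Ioi_wedgeHeight_le (hp : 1 ≤ p) (ha : 0 < a) (haM : a ≤ M / 2) (β : ℝ) :
    |∫ y in Ioi (wedgeHeight β M), oddKernelDeriv p (a - β * y) y| ≤
      (1 + 2 * p) * (2 * (M / 2) ^ (1 - 2 * p)) := by
  set H := wedgeHeight β M with hH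
  set k := max 1 β / 2 with hk
  have hM : 0 < M := by linarith
  have hk₀ : 0 < k := half_pos (lt_max_one β)
  have hk_inv : k⁻¹ ≤ 2 := inv_le_of_inv_le₀ two_pos (by linarith [le_max_left 1 β])
  have hkH : k * H = M / 2 := by rw [hk, hH, div_mul_eq_mul_div, max_one_mul_wedgeHeight]
  have hbound : ∀ y ∈ Ioi H, ‖oddKernelDeriv p (a - β * y) y‖ ≤
      (1 + 2 * p) * (k * y) ^ (-(2 * p)) := fun y hy => by
    have hy₀ : 0 < y := (wedgeHeight_nonneg hM.le).trans_lt hy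
    refine abs_oddKernelDeriv_le (by linarith) (mul_pos hk₀ hy₀) ?_
    rw [hk, div_mul_eq_mul_div, mul_div_assoc]
    exact max_one_mul_half_sq_le ha haM hy
  have hint : IntegrableOn (fun y => (1 + 2 * p) * (k * y) ^ (-(2 * p))) (Ioi H) :=
    ((integrableOn_Ioi_comp_mul_left_iff _ H hk₀).2
      (integrableOn_Ioi_rpow_of_lt (by linarith) (hkH ▸ half_pos hM))).const_mul _
  calc |∫ y in Ioi H, oddKernelDeriv p (a - β * y) y|
      ≤ ∫ y in Ioi H, (1 + 2 * p) * (k * y) ^ (-(2 * p)) :=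
        norm_integral_le_of_norm_le hint (ae_restrict_of_forall_mem measurableSet_Ioi hbound)
    _ = (1 + 2 * p) * (k⁻¹ * ((M / 2) ^ (1 - 2 * p) / (2 * p - 1))) := by
        rw [integral_const_mul, integral_comp_mul_left_Ioi (· ^ (-(2 * p))) H hk₀, hkH,
          integral_Ioi_rpow_of_lt (by linarith) (half_pos hM), smul_eq_mul, neg_add_eq_sub,
          neg_div, ← div_neg, neg_sub]
    _ ≤ (1 + 2 * p) * (k⁻¹ * (M / 2) ^ (1 - 2 * p)) := by
        gcongr
        exact div_le_self (by positivity) (by linarith)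
    _ ≤ (1 + 2 * p) * (2 * (M / 2) ^ (1 - 2 * p)) := by gcongr

lemma abs_integral_oddKernelDeriv_sub_le (hp : 1 ≤ p) (ha : 0 < a) (haM : a ≤ M / 2) (β : ℝ) :
    |∫ y in Ioc 0 (wedgeHeight β M), oddKernelDeriv p (a - M) y| ≤
      (1 + 2 * p) * (2 * (M / 2) ^ (1 - 2 * p)) := by
  have hM : 0 < M := by linarith
  have hbound : ∀ y ∈ Ioc 0 (wedgeHeight β M),
      ‖oddKernelDeriv p (a - M) y‖ ≤ (1 + 2 * p) * (M / 2) ^ (-(2 * p)) := fun y _ =>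
    abs_oddKernelDeriv_le (by linarith) (half_pos hM) (by nlinarith [sq_nonneg y])
  calc |∫ y in Ioc 0 (wedgeHeight β M), oddKernelDeriv p (a - M) y|
      ≤ (1 + 2 * p) * (M / 2) ^ (-(2 * p)) * volume.real (Ioc 0 (wedgeHeight β M)) :=
        norm_setIntegral_le_of_norm_le_const measure_Ioc_lt_top hbound
    _ ≤ (1 + 2 * p) * (M / 2) ^ (-(2 * p)) * M := by
        rw [Real.volume_real_Ioc_of_le (wedgeHeight_nonneg hM.le), sub_zero]
        gcongr
        exact wedgeHeight_le hM.le
    _ = (1 + 2 * p) * (2 * (M / 2) ^ (1 - 2 * p)) := by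
        rw [Real.rpow_sub (half_pos hM), Real.rpow_one, Real.rpow_neg (half_pos hM).le]
        ring

lemma abs_integral_oddKernelDeriv_sub_F_le {α : ℝ} (hα : 0 ≤ α) (ha : 0 < a) (haM : a ≤ M / 2)
    (β : ℝ) :
    |(∫ y in Ioc 0 (wedgeHeight β M), oddKernelDeriv (1 + α / 2) (a - β * y) y) -
        (∫ y in Ioc 0 (wedgeHeight β M), oddKernelDeriv (1 + α / 2) (a - M) y) -
          F α β / a ^ (1 + α)| ≤ 4 * (3 + α) * (M / 2) ^ (-(1 + α)) := by
  have hp : 1 ≤ 1 + α / 2 := by linarith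
  have hH : 0 ≤ wedgeHeight β M := wedgeHeight_nonneg (by linarith)
  have hint := integrableOn_Ioi_oddKernelDeriv hp ha β
  have hsplit : (∫ y in Ioc 0 (wedgeHeight β M), oddKernelDeriv (1 + α / 2) (a - β * y) y) +
      ∫ y in Ioi (wedgeHeight β M), oddKernelDeriv (1 + α / 2) (a - β * y) y =
        F α β / a ^ (1 + α) := by
    rw [← integral_Ioi_oddKernelDeriv_eq_F hα ha, ← Ioc_union_Ioi_eq_Ioi hH,
      setIntegral_union Ioc_disjoint_Ioi_same measurableSet_Ioi (hint.mono_set Ioc_subset_Ioi_self)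
        (hint.mono_set (Ioi_subset_Ioi hH))]
  have htail := abs_integral_Ioi_wedgeHeight_le hp ha haM β
  have hedge := abs_integral_oddKernelDeriv_sub_le hp ha haM β
  rw [show 1 - 2 * (1 + α / 2) = -(1 + α) by ring] at htail hedge
  rw [← hsplit]
  rw [abs_le] at *
  constructor <;> linarith

lemma hasPVSecondDerivNear_truncatedWedge {α : ℝ} (hα : 0 ≤ α) (hβ : 0 ≤ β) (M : ℝ) :
    HasPVSecondDerivNear (1 + α / 2) (truncatedWedge β M) (Ioc 0 (M / 2))
      (fun a => F α β / a ^ (1 + α)) (fun _ => 4 * (3 + α) * (M / 2) ^ (-(1 + α))) := by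
  set H := wedgeHeight β M
  have hp : 1 / 2 ≤ 1 + α / 2 := by linarith
  refine ⟨_, fun a ha => hasPVIntegral_truncatedWedge hp hβ ha.1 (by linarith [ha.1, ha.2]),
    fun a => (∫ y in Ioc 0 H, oddKernel (1 + α / 2) (a - β * y) y) -
      ∫ y in Ioc 0 H, oddKernel (1 + α / 2) (a - M) y,
    fun a => (∫ y in Ioc 0 H, oddKernelDeriv (1 + α / 2) (a - β * y) y) -
      ∫ y in Ioc 0 H, oddKernelDeriv (1 + α / 2) (a - M) y, fun a ha => ?_⟩
  have hd₁ : 0 < a / √(β ^ 2 + 1) := div_pos ha.1 (by positivity)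
  have hd₂ : 0 < M - a := by linarith [ha.1, ha.2]
  have hdist₂ (y : ℝ) : (M - a) ^ 2 ≤ (a - M) ^ 2 + y ^ 2 := by
    rw [sub_sq_comm]
    exact le_add_of_nonneg_right (sq_nonneg y)
  refine ⟨HasDerivAt.hasDerivWithinAt <| .fun_sub
      (hasDerivAt_setIntegral_oddKernelPotential hp (by fun_prop) hd₁ (div_sqrt_sq_le a β) H)
      (hasDerivAt_setIntegral_oddKernelPotential hp continuous_const hd₂ hdist₂ H),
    HasDerivAt.hasDerivWithinAt <| .fun_sub
      (hasDerivAt_setIntegral_oddKernel hp (by fun_prop) measurable_id measurableSet_Ioc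
        measure_Ioc_lt_top.ne hd₁ fun y _ => div_sqrt_sq_le a β y)
      (hasDerivAt_setIntegral_oddKernel hp measurable_const measurable_id measurableSet_Ioc
        measure_Ioc_lt_top.ne hd₂ fun y _ => hdist₂ y), ?_⟩
  exact abs_integral_oddKernelDeriv_sub_F_le hα ha.1 ha.2 β

end Wedge

section Assembly

variable {p β M δ K m : ℝ} {S Ω : Set (ℝ × ℝ)}

lemma hasPVSecondDerivNear_of_disjoint_square (hp : 1 / 2 ≤ p) (hm : 0 ≤ m) (hS : MeasurableSet S)
    (hvol : volume S ≤ ENNReal.ofReal m) (hdisj : Disjoint S (Icc (-M) M ×ˢ Icc (-M) M)) :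
    HasPVSecondDerivNear p S (Ioc 0 (M / 2)) 0
      (fun _ => (4 * p * (p + 1) + 6 * p) * (M / 2) ^ (-(2 * p + 1)) * m) := by
  refine hasPVSecondDerivNear_of_sq_le hp hm hS hvol (fun a ha => ha.1.trans_le ha.2)
    fun a ⟨ha, haM⟩ y hy => ?_
  by_contra! hlt
  have h₁ : |a - y.1| ≤ M / 2 := abs_le_of_sq_le_sq (by nlinarith [sq_nonneg y.2]) (by linarith)
  have h₂ : |y.2| ≤ M / 2 := abs_le_of_sq_le_sq (by nlinarith [sq_nonneg (a - y.1)]) (by linarith)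
  rw [abs_le] at h₁ h₂
  exact disjoint_left.1 hdisj hy
    ⟨⟨by linarith, by linarith⟩, ⟨by linarith, by linarith⟩⟩

lemma hasPVSecondDerivNear_of_subset_closedDisc (hp : 1 / 2 ≤ p) (hδ : 0 < δ)
    (hS : MeasurableSet S) (hsub : S ⊆ closedDisc 0 δ) :
    HasPVSecondDerivNear p S (Ici (2 * δ)) 0
      (fun a => (4 * p * (p + 1) + 6 * p) * (a / 2) ^ (-(2 * p + 1)) * (4 * δ ^ 2)) := by
  refine hasPVSecondDerivNear_of_sq_le hp (by positivity) hS
    ((measure_mono hsub).trans (volume_closedDisc_le hδ.le))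
    (fun a ha => half_pos ((mul_pos two_pos hδ).trans_le ha)) fun a (ha : 2 * δ ≤ a) y hy => ?_
  have hy' : (y.1 - 0) ^ 2 + y.2 ^ 2 ≤ δ ^ 2 := hsub hy
  have hy₁ : y.1 ≤ δ := le_of_abs_le (abs_le_of_sq_le_sq (by nlinarith [sq_nonneg y.2]) hδ.le)
  nlinarith [sq_nonneg y.2]

lemma sdiff_square_union_eq (hβ : 0 ≤ β)
    (hcone : Ω ∩ {x | x.1 ∈ Icc (-M) M ∧ x.2 ∈ Icc (-M) M ∧ δ ^ 2 < x.1 ^ 2 + x.2 ^ 2} =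
      {x | 0 < x.1 ∧ 0 < x.2 ∧ β * x.2 < x.1} ∩
        {x | x.1 ∈ Icc (-M) M ∧ x.2 ∈ Icc (-M) M ∧ δ ^ 2 < x.1 ^ 2 + x.2 ^ 2}) :
    Ω \ (Icc (-M) M ×ˢ Icc (-M) M) ∪ (Ω ∩ (Icc (-M) M ×ˢ Icc (-M) M) ∩ closedDisc 0 δ ∪
      truncatedWedge β M \ (truncatedWedge β M ∩ closedDisc 0 δ)) = Ω := by
  ext x
  have hx := Set.ext_iff.1 hcone x
  have hpos (h : 0 < x.2) : 0 ≤ β * x.2 := mul_nonneg hβ h.le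
  simp only [truncatedWedge, closedDisc, mem_inter_iff, mem_union, Set.mem_sdiff, mem_ofPred_eq,
    mem_prod, mem_Icc, sub_zero] at hx ⊢
  grind

lemma hasPVSecondDerivNear_of_inter_eq {α : ℝ} (hα : 0 ≤ α) (hβ : 0 ≤ β) (hδ : 0 < δ) (hK : 0 ≤ K)
    (hΩ : MeasurableSet Ω) (hvol : volume Ω ≤ ENNReal.ofReal (K * M ^ 2))
    (hcone : Ω ∩ {x | x.1 ∈ Icc (-M) M ∧ x.2 ∈ Icc (-M) M ∧ δ ^ 2 < x.1 ^ 2 + x.2 ^ 2} =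
      {x | 0 < x.1 ∧ 0 < x.2 ∧ β * x.2 < x.1} ∩
        {x | x.1 ∈ Icc (-M) M ∧ x.2 ∈ Icc (-M) M ∧ δ ^ 2 < x.1 ^ 2 + x.2 ^ 2}) :
    HasPVSecondDerivNear (1 + α / 2) Ω (Icc (2 * δ) (M / 2)) (fun a => F α β / a ^ (1 + α))
      (fun a => (α + 2) * (α + 7) * (M / 2) ^ (-(3 + α)) * (K * M ^ 2) +
        (2 * ((α + 2) * (α + 7) * (a / 2) ^ (-(3 + α)) * (4 * δ ^ 2)) +
          4 * (3 + α) * (M / 2) ^ (-(1 + α)))) := by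
  have hp : 1 / 2 ≤ 1 + α / 2 := by linarith
  have hQ : MeasurableSet (Icc (-M) M ×ˢ Icc (-M) M) := measurableSet_Icc.prod measurableSet_Icc
  have hD := measurableSet_closedDisc 0 δ
  have hT := measurableSet_truncatedWedge β M
  have hvolΩ : volume Ω ≠ ⊤ := ne_top_of_le_ne_top ENNReal.ofReal_ne_top hvol
  have hvolT := volume_truncatedWedge_ne_top hβ M
  have hI : Icc (2 * δ) (M / 2) ⊆ Ioc 0 (M / 2) := fun a ha => ⟨by linarith [ha.1], ha.2⟩
  have far := (hasPVSecondDerivNear_of_disjoint_square hp (by positivity) (hΩ.diff hQ)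
    ((measure_mono sdiff_subset).trans hvol) disjoint_sdiff_left).mono_set hI
  have core := (hasPVSecondDerivNear_of_subset_closedDisc hp hδ ((hΩ.inter hQ).inter hD)
    inter_subset_right).mono_set (I := Icc (2 * δ) (M / 2)) Icc_subset_Ici_self
  have tip := (hasPVSecondDerivNear_of_subset_closedDisc hp hδ (hT.inter hD)
    inter_subset_right).mono_set (I := Icc (2 * δ) (M / 2)) Icc_subset_Ici_self
  have wedge := (hasPVSecondDerivNear_truncatedWedge hα hβ M).mono_set hI
  have near := core.union hp ((hΩ.inter hQ).inter hD) (hT.diff (hT.inter hD))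
    (measure_ne_top_of_subset (inter_subset_left.trans inter_subset_left) hvolΩ)
    (measure_ne_top_of_subset sdiff_subset hvolT)
    (disjoint_left.2 fun _ hx hx' => hx'.2 ⟨hx'.1, hx.2⟩)
    (wedge.sdiff hp hT (hT.inter hD) hvolT inter_subset_left tip)
  have total := far.union hp (hΩ.diff hQ)
    (((hΩ.inter hQ).inter hD).union (hT.diff (hT.inter hD)))
    (measure_ne_top_of_subset sdiff_subset hvolΩ)
    (measure_union_ne_top
      (measure_ne_top_of_subset (inter_subset_left.trans inter_subset_left) hvolΩ)
      (measure_ne_top_of_subset sdiff_subset hvolT))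
    (disjoint_sdiff_left.mono_right (union_subset (inter_subset_left.trans inter_subset_right)
      (sdiff_subset.trans (truncatedWedge_subset_square hβ M)))) near
  rw [sdiff_square_union_eq hβ hcone, zero_add, zero_add, sub_zero] at total
  refine total.mono_bound fun a _ => le_of_eq ?_
  simp only [Pi.add_apply]
  ring_nf

lemma div_two_rpow_neg {x : ℝ} (hx : 0 ≤ x) (s : ℝ) : (x / 2) ^ (-s) = 2 ^ s / x ^ s := by
  rw [Real.rpow_neg (by positivity), Real.div_rpow hx zero_le_two, inv_div]

end Assembly

theorem stmt15_general {α K : ℝ} (hα : 0 ≤ α) (hK : 0 ≤ K) :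
    ∃ C : ℝ, 0 < C ∧ ∀ (β M δ : ℝ) (Ω : Set (ℝ × ℝ)), 0 ≤ β → 0 < δ → MeasurableSet Ω →
      volume Ω ≤ ENNReal.ofReal (K * M ^ 2) →
      Ω ∩ {x | x.1 ∈ Icc (-M) M ∧ x.2 ∈ Icc (-M) M ∧ δ ^ 2 < x.1 ^ 2 + x.2 ^ 2} =
        {x | 0 < x.1 ∧ 0 < x.2 ∧ β * x.2 < x.1} ∩
          {x | x.1 ∈ Icc (-M) M ∧ x.2 ∈ Icc (-M) M ∧ δ ^ 2 < x.1 ^ 2 + x.2 ^ 2} →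
      HasPVSecondDerivNear (1 + α / 2) Ω (Icc (2 * δ) (M / 2)) (fun a => F α β / a ^ (1 + α))
        (fun a => C * (1 / M ^ (1 + α) + δ ^ 2 / a ^ (3 + α))) := by
  set C₁ : ℝ := 2 ^ (3 + α) * ((α + 2) * (α + 7) * K) + 2 ^ (1 + α) * (4 * (3 + α))
  set C₂ : ℝ := 2 ^ (3 + α) * (8 * ((α + 2) * (α + 7)))
  refine ⟨C₁ + C₂, by positivity, fun β M δ Ω hβ hδ hΩ hvol hcone =>
    (hasPVSecondDerivNear_of_inter_eq hα hβ hδ hK hΩ hvol hcone).mono_bound fun a ha => ?_⟩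
  have ha₀ : 0 < a := (mul_pos two_pos hδ).trans_le ha.1
  have hM : 0 < M := by linarith [ha.2]
  have hM_pow : M ^ (3 + α) = M ^ 2 * M ^ (1 + α) := by
    rw [← Real.rpow_natCast, ← Real.rpow_add hM]
    congr 1
    push_cast
    ring
  have hM_term : 0 ≤ 1 / M ^ (1 + α) := by positivity
  have hδ_term : 0 ≤ δ ^ 2 / a ^ (3 + α) := by positivity
  calc (α + 2) * (α + 7) * (M / 2) ^ (-(3 + α)) * (K * M ^ 2) +
        (2 * ((α + 2) * (α + 7) * (a / 2) ^ (-(3 + α)) * (4 * δ ^ 2)) +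
          4 * (3 + α) * (M / 2) ^ (-(1 + α)))
      = C₁ * (1 / M ^ (1 + α)) + C₂ * (δ ^ 2 / a ^ (3 + α)) := by
        rw [div_two_rpow_neg hM.le, div_two_rpow_neg hM.le, div_two_rpow_neg ha₀.le, hM_pow]
        field_simp
        ring
    _ ≤ (C₁ + C₂) * (1 / M ^ (1 + α) + δ ^ 2 / a ^ (3 + α)) := by
        have hC₁_nonneg : 0 ≤ C₁ := by positivity
        have hC₂_nonneg : 0 ≤ C₂ := by positivity
        nlinarith

theorem stmt15 (α : ℝ) (hα0 : 0 ≤ α) (hα2 : α < 2) :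
    ∃ C : ℝ, 0 < C ∧ ∀ (β M δ : ℝ) (Ω₀ : Set (ℝ × ℝ)),
      0 ≤ β → 0 < M → 0 < δ → δ ≤ M / 4 →
      IsOpen Ω₀ → Bornology.IsBounded Ω₀ →
      volume Ω₀ ≤ ENNReal.ofReal (100 * M ^ 2) →
      Ω₀ ∩ {x : ℝ × ℝ | x.1 ∈ Set.Icc (-M) M ∧ x.2 ∈ Set.Icc (-M) M ∧
          δ ^ 2 < x.1 ^ 2 + x.2 ^ 2} =
        {x : ℝ × ℝ | 0 < x.1 ∧ 0 < x.2 ∧ β * x.2 < x.1} ∩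
          {x : ℝ × ℝ | x.1 ∈ Set.Icc (-M) M ∧ x.2 ∈ Set.Icc (-M) M ∧
            δ ^ 2 < x.1 ^ 2 + x.2 ^ 2} →
      ∃ V : ℝ → ℝ,
        (∀ a ∈ Set.Icc (2 * δ) (M / 2),
          Filter.Tendsto
            (fun ε : ℝ => ∫ y in Ω₀ \ {y : ℝ × ℝ | (y.1 - a) ^ 2 + y.2 ^ 2 ≤ ε ^ 2},
              (a - y.1) / ((a - y.1) ^ 2 + y.2 ^ 2) ^ (1 + α / 2))
            (nhdsWithin 0 (Set.Ioi 0)) (nhds (V a))) ∧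
        ∃ V' V'' : ℝ → ℝ, ∀ a ∈ Set.Icc (2 * δ) (M / 2),
          HasDerivWithinAt V (V' a) (Set.Icc (2 * δ) (M / 2)) a ∧
          HasDerivWithinAt V' (V'' a) (Set.Icc (2 * δ) (M / 2)) a ∧
          |V'' a - F α β / a ^ (1 + α)| ≤
            C * (1 / M ^ (1 + α) + δ ^ 2 / a ^ (3 + α)) := by
  obtain ⟨C, hC, h⟩ := stmt15_general hα0 (by norm_num : (0 : ℝ) ≤ 100)
  exact ⟨C, hC, fun β M δ Ω₀ hβ _ hδ _ hΩ₀ _ => h β M δ Ω₀ hβ hδ hΩ₀.measurableSet⟩
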